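/- (Equilibrium Characterization of the VCS-controlled system) Let E>0, g_l>0, n = n_F + n_I with flexible loads F = {1,…,n_F} (n_F ≥ 1) and inflexible loads I = {n_F+1,…,n}, demands P_{0,i} ≥ 0, load-shedding parameters κ_i > 0 for i ∈ F with κ̄ = Σ_{i∈F} κ_i, and a, b > 0. Set P̄₀ = Σᵢ P_{0,i}, P_max = E²·g_l/4, v(g) = E·g_l/(Σⱼ gⱼ + g_l), and ΔPᵢ(g) = v(g)²·gᵢ − P_{0,i}. A point (g, φ, ĝ) ∈ ℝⁿ_{≥0} × ℝ × ℝ^{n_F} is an equilibrium of the closed-loop dynamics ġᵢ = −ΔPᵢ(g) − κᵢ·φ + b·(ĝᵢ − gᵢ) for i ∈ F, ġᵢ = −ΔPᵢ(g) for i ∈ I, φ̇ = (Σⱼ ΔPⱼ(g)) · (E·g_l)²·(g_l − ḡ)/(ḡ + g_l)³ with ḡ = Σⱼ gⱼ, and ĝ̇ᵢ = −a·(ĝᵢ − gᵢ) for i ∈ F, if and only if ĝᵢ = gᵢ for all i ∈ F and one of the following holds: (load satisfaction) ΔPᵢ(g) = 0 for all i ∈ {1,…,n} and φ = 0; or (proportional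 allocation) ΔPᵢ(g) = (κᵢ/κ̄)·(P_max − P̄₀) for all i ∈ F, ΔPᵢ(g) = 0 for all i ∈ I, and φ = (P̄₀ − P_max)/κ̄. -/

import Mathlib

/-- Load voltage `v(g) = E·g_l/(Σⱼ gⱼ + g_l)` of the star DC network. -/
noncomputable def loadVoltage (E gl : ℝ) {ι : Type*} [Fintype ι] (g : ι → ℝ) : ℝ :=
  E * gl / ((∑ j, g j) + gl)

/-- Power mismatch `ΔPᵢ(g) = v(g)²·gᵢ − P₀ᵢ` of load `i`. -/
noncomputable def deltaP (E gl : ℝ) {ι : Type*} [Fintype ι] (P0 g : ι → ℝ) (i : ι) : ℝ :=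
  (loadVoltage E gl g) ^ 2 * g i - P0 i

/-!
At an equilibrium `ghatᵢ = gᵢ`, so the mismatches of the flexible loads are `-κᵢ φ`, those of the
inflexible loads vanish, and the total mismatch determines `φ`. The equation for `φ` says that
the total mismatch or the slope `(E g_l)² (g_l - ḡ) / (ḡ + g_l)³` of the total power `v² ḡ`
vanishes. Since `P_max - v² ḡ = E² g_l (g_l - ḡ)² / (4 (ḡ + g_l)²)`, the slope vanishes exactly
when the total power is `P_max`, that is, when the total mismatch is `P_max - P̄₀`.
-/

section ProportionalAllocation

variable {ι 𝕜 : Type*} [Fintype ι] [Field 𝕜]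

theorem sum_div_sum_mul_eq {κ : ι → 𝕜} (hκ : ∑ k, κ k ≠ 0) (c : 𝕜) :
    ∑ i, κ i / (∑ k, κ k) * c = c := by
  rw [← Finset.sum_mul, ← Finset.sum_div, div_self hκ, one_mul]

theorem eq_neg_mul_and_sum_eq_iff {κ : ι → 𝕜} (hκ : ∑ k, κ k ≠ 0) (x : ι → 𝕜) (φ c : 𝕜) :
    (∀ i, x i = -(κ i * φ)) ∧ ∑ i, x i = c ↔
      (∀ i, x i = κ i / (∑ k, κ k) * c) ∧ φ = -c / ∑ k, κ k := by
  constructor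
  · rintro ⟨hx, hsum⟩
    have hc : -((∑ k, κ k) * φ) = c := by
      simpa only [hx, Finset.sum_neg_distrib, ← Finset.sum_mul] using hsum
    subst hc
    refine ⟨fun i => ?_, ?_⟩
    · rw [hx i]
      field_simp
    · field_simp
  · rintro ⟨hx, rfl⟩
    refine ⟨fun i => ?_, ?_⟩
    · rw [hx i]
      ring
    · simpa only [hx] using sum_div_sum_mul_eq hκ c

theorem inl_eq_neg_mul_and_inr_eq_zero_and_sum_eq_iff {F I : Type*} [Fintype F] [Fintype I]
    {κ : F → 𝕜} (hκ : ∑ k, κ k ≠ 0) (x : F ⊕ I → 𝕜) (φ c : 𝕜) :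
    (∀ i, x (Sum.inl i) = -(κ i * φ)) ∧ (∀ i, x (Sum.inr i) = 0) ∧ ∑ j, x j = c ↔
      (∀ i, x (Sum.inl i) = κ i / (∑ k, κ k) * c) ∧ (∀ i, x (Sum.inr i) = 0) ∧
        φ = -c / ∑ k, κ k := by
  rw [and_left_comm, and_left_comm (b := ∀ i, x (Sum.inr i) = 0)]
  refine and_congr_right fun hI => ?_
  have hsum : ∑ j, x j = ∑ i, x (Sum.inl i) := by
    simp only [Fintype.sum_sum_type, hI, Finset.sum_const_zero, add_zero]
  rw [hsum]
  exact eq_neg_mul_and_sum_eq_iff hκ (fun i => x (Sum.inl i)) φ c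

end ProportionalAllocation

section PowerTransfer

variable {ι : Type*} [Fintype ι] {E gl : ℝ} {g : ι → ℝ}

theorem sum_deltaP (E gl : ℝ) (P0 g : ι → ℝ) :
    ∑ i, deltaP E gl P0 g i = loadVoltage E gl g ^ 2 * (∑ i, g i) - ∑ i, P0 i := by
  simp only [deltaP, Finset.sum_sub_distrib, Finset.mul_sum]

theorem maxPower_sub_totalPower (hg : (∑ i, g i) + gl ≠ 0) :
    E ^ 2 * gl / 4 - loadVoltage E gl g ^ 2 * (∑ i, g i) =
      E ^ 2 * gl * (gl - ∑ i, g i) ^ 2 / (4 * ((∑ i, g i) + gl) ^ 2) := by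
  unfold loadVoltage
  field_simp
  ring

theorem totalPower_slope_eq_zero_iff (hg : (∑ i, g i) + gl ≠ 0) :
    (E * gl) ^ 2 * (gl - ∑ i, g i) / ((∑ i, g i) + gl) ^ 3 = 0 ↔
      loadVoltage E gl g ^ 2 * (∑ i, g i) = E ^ 2 * gl / 4 := by
  rw [eq_comm (b := E ^ 2 * gl / 4), ← sub_eq_zero (a := E ^ 2 * gl / 4),
    maxPower_sub_totalPower hg]
  simp [hg]

theorem sum_deltaP_mul_slope_eq_zero_iff (P0 : ι → ℝ) (hg : (∑ i, g i) + gl ≠ 0) :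
    (∑ i, deltaP E gl P0 g i) *
        ((E * gl) ^ 2 * (gl - ∑ i, g i) / ((∑ i, g i) + gl) ^ 3) = 0 ↔
      ∑ i, deltaP E gl P0 g i = 0 ∨
        ∑ i, deltaP E gl P0 g i = E ^ 2 * gl / 4 - ∑ i, P0 i := by
  rw [mul_eq_zero, totalPower_slope_eq_zero_iff hg, sum_deltaP, sub_left_inj]

end PowerTransfer

theorem stmt_10_general {F I : Type*} [Fintype F] [Fintype I] (E gl a b : ℝ) (ha : a ≠ 0)
    (P0 : F ⊕ I → ℝ) (κ : F → ℝ) (hκ : ∑ k, κ k ≠ 0)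
    (g : F ⊕ I → ℝ) (hg : (∑ j, g j) + gl ≠ 0) (φ : ℝ) (ghat : F → ℝ) :
    ((∀ i : F, -(deltaP E gl P0 g (Sum.inl i)) - κ i * φ + b * (ghat i - g (Sum.inl i)) = 0) ∧
     (∀ i : I, -(deltaP E gl P0 g (Sum.inr i)) = 0) ∧
     (∑ j, deltaP E gl P0 g j) *
        ((E * gl) ^ 2 * (gl - ∑ j, g j) / ((∑ j, g j) + gl) ^ 3) = 0 ∧
     (∀ i : F, -(a * (ghat i - g (Sum.inl i))) = 0))
    ↔
    ((∀ i : F, ghat i = g (Sum.inl i)) ∧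
     (((∀ i, deltaP E gl P0 g i = 0) ∧ φ = 0) ∨
      ((∀ i : F, deltaP E gl P0 g (Sum.inl i) =
          (κ i / ∑ k, κ k) * (E ^ 2 * gl / 4 - ∑ j, P0 j)) ∧
       (∀ i : I, deltaP E gl P0 g (Sum.inr i) = 0) ∧
       φ = ((∑ j, P0 j) - E ^ 2 * gl / 4) / (∑ k, κ k)))) := by
  have hghat : (∀ i, -(a * (ghat i - g (Sum.inl i))) = 0) ↔ ∀ i, ghat i = g (Sum.inl i) := by
    simp only [neg_eq_zero, mul_eq_zero, ha, false_or, sub_eq_zero]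
  have hflex (h : ∀ i, ghat i = g (Sum.inl i)) :
      (∀ i, -(deltaP E gl P0 g (Sum.inl i)) - κ i * φ + b * (ghat i - g (Sum.inl i)) = 0) ↔
        ∀ i, deltaP E gl P0 g (Sum.inl i) = -(κ i * φ) := by
    simp only [h, sub_self, mul_zero, add_zero, sub_eq_zero, neg_eq_iff_eq_neg]
  have hsatisfied := inl_eq_neg_mul_and_inr_eq_zero_and_sum_eq_iff hκ (deltaP E gl P0 g) φ 0
  simp only [mul_zero, neg_zero, zero_div] at hsatisfied
  have hproportional := inl_eq_neg_mul_and_inr_eq_zero_and_sum_eq_iff hκ (deltaP E gl P0 g) φ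
    (E ^ 2 * gl / 4 - ∑ j, P0 j)
  rw [neg_sub] at hproportional
  rw [hghat, sum_deltaP_mul_slope_eq_zero_iff P0 hg, Sum.forall, and_assoc, ← hsatisfied,
    ← hproportional, ← and_or_left, ← and_or_left]
  simp only [neg_eq_zero]
  exact ⟨fun ⟨hF, hI, hT, h⟩ => ⟨h, (hflex h).mp hF, hI, hT⟩,
    fun ⟨h, hF, hI, hT⟩ => ⟨(hflex h).mpr hF, hI, hT, h⟩⟩

/-- Equilibrium characterization of the VCS-controlled closed-loop system: a point
`(g, φ, ghat)` is an equilibrium iff `ghatᵢ = gᵢ` for all flexible `i` and either the load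
satisfaction conditions (`ΔPᵢ = 0` for all loads and `φ = 0`) or the proportional
allocation conditions hold. Flexible loads are indexed by `Fin nF` (via `Sum.inl`) and
inflexible loads by `Fin nI` (via `Sum.inr`). -/
theorem stmt_10 (E gl a b : ℝ) (hE : 0 < E) (hgl : 0 < gl) (ha : 0 < a) (hb : 0 < b)
    (nF nI : ℕ) (hnF : 1 ≤ nF)
    (P0 : Fin nF ⊕ Fin nI → ℝ) (hP0 : ∀ i, 0 ≤ P0 i)
    (κ : Fin nF → ℝ) (hκ : ∀ i, 0 < κ i)
    (g : Fin nF ⊕ Fin nI → ℝ) (hg : ∀ i, 0 ≤ g i)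
    (φ : ℝ) (ghat : Fin nF → ℝ) :
    ((∀ i : Fin nF,
        -(deltaP E gl P0 g (Sum.inl i)) - κ i * φ + b * (ghat i - g (Sum.inl i)) = 0) ∧
     (∀ i : Fin nI, -(deltaP E gl P0 g (Sum.inr i)) = 0) ∧
     (∑ j, deltaP E gl P0 g j) *
        ((E * gl) ^ 2 * (gl - ∑ j, g j) / ((∑ j, g j) + gl) ^ 3) = 0 ∧
     (∀ i : Fin nF, -(a * (ghat i - g (Sum.inl i))) = 0))
    ↔
    ((∀ i : Fin nF, ghat i = g (Sum.inl i)) ∧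
     (((∀ i, deltaP E gl P0 g i = 0) ∧ φ = 0) ∨
      ((∀ i : Fin nF, deltaP E gl P0 g (Sum.inl i) =
          (κ i / ∑ k, κ k) * (E ^ 2 * gl / 4 - ∑ j, P0 j)) ∧
       (∀ i : Fin nI, deltaP E gl P0 g (Sum.inr i) = 0) ∧
       φ = ((∑ j, P0 j) - E ^ 2 * gl / 4) / (∑ k, κ k)))) := by
  have hκ_sum : 0 < ∑ k, κ k := Finset.sum_pos (fun i _ => hκ i) ⟨⟨0, hnF⟩, Finset.mem_univ _⟩
  have hg_sum : 0 ≤ ∑ j, g j := Finset.sum_nonneg fun j _ => hg j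
  exact stmt_10_general E gl a b ha.ne' P0 κ hκ_sum.ne' g (by positivity) φ ghat
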